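/- arXiv:0810.1865 — 4 statements merged into one kernel-verified Lean document; each statement's English description precedes it below -/
import Mathlib

section
/- Let V be a finite-dimensional real vector space. For every subspace E ⊆ V and every alternating bilinear form ε on E, the subspace L(E,ε) is a linear Dirac structure on V; moreover L(E,0) = E ⊕ Ann(E). -/
open Module

variable {V : Type*} [AddCommGroup V] [Module ℝ V]

/-- The canonical symmetric pairing on `V ⊕ V*`: `⟨u+α, v+β⟩ = (α v + β u)/2`. -/
noncomputable def diracPairing (p q : V × Module.Dual ℝ V) : ℝ :=
  (p.2 q.1 + q.2 p.1) / 2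

/-- A subspace of `V ⊕ V*` is isotropic if the canonical pairing vanishes on it. -/
def IsIsotropic (L : Submodule ℝ (V × Module.Dual ℝ V)) : Prop :=
  ∀ p ∈ L, ∀ q ∈ L, diracPairing p q = 0

/-- A linear Dirac structure on `V` is a maximal isotropic subspace of `V ⊕ V*`. -/
def IsDirac (L : Submodule ℝ (V × Module.Dual ℝ V)) : Prop :=
  IsIsotropic L ∧ ∀ L' : Submodule ℝ (V × Module.Dual ℝ V), IsIsotropic L' → L ≤ L' → L' = L

/-- `L(E,ε) = {u + α : u ∈ E, α|_E = ε(u,·)}`. -/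
def LSpace (E : Submodule ℝ V) (ε : ↥E →ₗ[ℝ] ↥E →ₗ[ℝ] ℝ) :
    Submodule ℝ (V × Module.Dual ℝ V) where
  carrier := {p | ∃ u : E, p.1 = ↑u ∧ ∀ v : E, p.2 ↑v = ε u v}
  add_mem' := by
    rintro ⟨x, α⟩ ⟨y, β⟩ ⟨u, hu, hα⟩ ⟨w, hw, hβ⟩
    refine ⟨u + w, by simpa using congrArg₂ (· + ·) hu hw, fun v => ?_⟩
    simp [hα v, hβ v]
  zero_mem' := ⟨0, by simp, fun v => by simp⟩
  smul_mem' := by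
    rintro c ⟨x, α⟩ ⟨u, hu, hα⟩
    exact ⟨c • u, by simpa using congrArg (c • ·) hu, fun v => by simp [hα v]⟩

/-!
Write `L⊥` for the orthogonal complement of `L` under the canonical pairing. If `L⊥ = L`, then `L`
is maximal isotropic: an isotropic `L' ⊇ L` satisfies `L' ≤ L'⊥ ≤ L⊥ = L`. For any bilinear form
`ε` on `E` one has `L(E,ε)⊥ = L(E,-εᵀ)`: pairing with the elements of `0 ⊕ Ann(E)` forces the
vector component into `E`, and pairing with `v + β`, where `β` extends `ε(v,·)` to `V`, determines
the covector component on `E`. Finally, `ε` is alternating exactly when `ε = -εᵀ`.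
-/

/-- The canonical pairing as a bilinear form, so that `L.orthogonalBilin diracForm` is the
orthogonal complement `L⊥` of a subspace `L` of `V ⊕ V*`. It is half of Mathlib's
`LinearMap.dualProd`, whose factors come in the order `V* ⊕ V`. -/
noncomputable def diracForm : LinearMap.BilinForm ℝ (V × Dual ℝ V) :=
  let swap := (LinearEquiv.prodComm ℝ V (Dual ℝ V)).toLinearMap
  (1 / 2 : ℝ) • (LinearMap.dualProd ℝ V).compl₁₂ swap swap

theorem diracForm_apply (p q : V × Dual ℝ V) : diracForm p q = diracPairing p q := by
  simp only [diracForm, diracPairing, LinearMap.smul_apply, LinearMap.compl₁₂_apply,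
    LinearEquiv.coe_coe, LinearEquiv.prodComm_apply, LinearMap.dualProd_apply_apply,
    Prod.fst_swap, Prod.snd_swap, smul_eq_mul]
  ring

theorem mem_orthogonalBilin_diracForm_iff {L : Submodule ℝ (V × Dual ℝ V)} {p : V × Dual ℝ V} :
    p ∈ L.orthogonalBilin diracForm ↔ ∀ q ∈ L, q.2 p.1 + p.2 q.1 = 0 := by
  simp [Submodule.mem_orthogonalBilin_iff, diracForm_apply, diracPairing]

theorem isIsotropic_iff_le_orthogonalBilin {L : Submodule ℝ (V × Dual ℝ V)} :
    IsIsotropic L ↔ L ≤ L.orthogonalBilin diracForm := by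
  simp only [IsIsotropic, ← diracForm_apply, SetLike.le_def, Submodule.mem_orthogonalBilin_iff]
  exact ⟨fun h p hp q hq => h q hq p hp, fun h p hp q hq => h hq p hp⟩

theorem isDirac_of_orthogonalBilin_eq {L : Submodule ℝ (V × Dual ℝ V)}
    (hL : L.orthogonalBilin diracForm = L) : IsDirac L := by
  refine ⟨isIsotropic_iff_le_orthogonalBilin.2 hL.ge, fun L' hL' hLL' => le_antisymm ?_ hLL'⟩
  calc L' ≤ L'.orthogonalBilin diracForm := isIsotropic_iff_le_orthogonalBilin.1 hL'
    _ ≤ L.orthogonalBilin diracForm := Submodule.orthogonalBilin_le hLL'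
    _ = L := hL

theorem mk_mem_lSpace_iff {E : Submodule ℝ V} {ε : E →ₗ[ℝ] E →ₗ[ℝ] ℝ} {x : V} {α : Dual ℝ V} :
    (x, α) ∈ LSpace E ε ↔ ∃ hx : x ∈ E, E.dualRestrict α = ε ⟨x, hx⟩ := by
  constructor
  · rintro ⟨u, rfl, hα⟩
    exact ⟨u.2, LinearMap.ext hα⟩
  · rintro ⟨hx, hα⟩
    exact ⟨⟨x, hx⟩, rfl, LinearMap.congr_fun hα⟩

theorem lSpace_zero (E : Submodule ℝ V) : LSpace E 0 = E.prod E.dualAnnihilator := by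
  ext ⟨x, α⟩
  simp [mk_mem_lSpace_iff, ← Submodule.dualRestrict_ker_eq_dualAnnihilator]

theorem zero_mk_mem_lSpace {E : Submodule ℝ V} (ε : E →ₗ[ℝ] E →ₗ[ℝ] ℝ) {α : Dual ℝ V}
    (hα : α ∈ E.dualAnnihilator) : (0, α) ∈ LSpace E ε := by
  rw [← Submodule.dualRestrict_ker_eq_dualAnnihilator, LinearMap.mem_ker] at hα
  exact mk_mem_lSpace_iff.2 ⟨E.zero_mem, hα.trans (map_zero ε).symm⟩

theorem exists_mk_mem_lSpace {E : Submodule ℝ V} (ε : E →ₗ[ℝ] E →ₗ[ℝ] ℝ) (u : E) :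
    ∃ α : Dual ℝ V, (↑u, α) ∈ LSpace E ε :=
  (Subspace.dualRestrict_surjective (ε u)).imp fun _ hα => mk_mem_lSpace_iff.2 ⟨u.2, hα⟩

theorem orthogonalBilin_lSpace (E : Submodule ℝ V) (ε : E →ₗ[ℝ] E →ₗ[ℝ] ℝ) :
    (LSpace E ε).orthogonalBilin diracForm = LSpace E (-ε.flip) := by
  ext ⟨x, α⟩
  rw [mem_orthogonalBilin_diracForm_iff]
  constructor
  · intro h
    have hx : x ∈ E := by
      refine (Subspace.forall_mem_dualAnnihilator_apply_eq_zero_iff E x).1 fun φ hφ => ?_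
      simpa using h _ (zero_mk_mem_lSpace ε hφ)
    refine mk_mem_lSpace_iff.2 ⟨hx, LinearMap.ext fun v => ?_⟩
    obtain ⟨β, hβ⟩ := exists_mk_mem_lSpace ε v
    have hβx : β x = ε v ⟨x, hx⟩ :=
      LinearMap.congr_fun (mk_mem_lSpace_iff.1 hβ).2 ⟨x, hx⟩
    calc α v = -β x := eq_neg_of_add_eq_zero_right (h _ hβ)
      _ = -ε v ⟨x, hx⟩ := by rw [hβx]
  · rintro ⟨u, rfl, hα⟩ ⟨_, β⟩ ⟨v, rfl, hβ⟩
    simp only [hα, hβ, LinearMap.neg_apply, LinearMap.flip_apply, add_neg_cancel]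

theorem isDirac_lSpace {E : Submodule ℝ V} {ε : E →ₗ[ℝ] E →ₗ[ℝ] ℝ} (hε : ε.IsAlt) :
    IsDirac (LSpace E ε) :=
  isDirac_of_orthogonalBilin_eq <| by
    rw [orthogonalBilin_lSpace, ← LinearMap.isAlt_iff_eq_neg_flip.1 hε]

theorem lSpace_isDirac_and_lSpace_zero_general
    (V : Type*) [AddCommGroup V] [Module ℝ V]
    (E : Submodule ℝ V) (ε : E →ₗ[ℝ] E →ₗ[ℝ] ℝ) (hε : ∀ x : E, ε x x = 0) :
    IsDirac (LSpace E ε) ∧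
    LSpace E (0 : E →ₗ[ℝ] E →ₗ[ℝ] ℝ) = E.prod (Submodule.dualAnnihilator E) :=
  ⟨isDirac_lSpace hε, lSpace_zero E⟩

theorem lSpace_isDirac_and_lSpace_zero
    (V : Type*) [AddCommGroup V] [Module ℝ V] [FiniteDimensional ℝ V]
    (E : Submodule ℝ V) (ε : ↥E →ₗ[ℝ] ↥E →ₗ[ℝ] ℝ) (hε : ∀ x : E, ε x x = 0) :
    IsDirac (LSpace E ε) ∧
    LSpace E (0 : ↥E →ₗ[ℝ] ↥E →ₗ[ℝ] ℝ) = E.prod (Submodule.dualAnnihilator E) :=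
  lSpace_isDirac_and_lSpace_zero_general V E ε hε
end

section
/- Let V be a finite-dimensional real vector space, let L be an isotropic subspace of V ⊕ V*, and let E = π(L). Then there exists a unique alternating bilinear form ε on E such that L ⊆ L(E,ε). -/
open Module

variable {V : Type*} [AddCommGroup V] [Module ℝ V]

/-!
Write `E = π(L)`. The inclusion `L ⊆ L(E,ε)` says that `ε`, viewed as a map `E → E*`, composed with
the surjection `π : L → E` is the map `u + α ↦ α|_E`. So `ε` is unique, and it exists because `α|_E`
depends only on `u`: for `v + β ∈ L`, isotropy gives `α v = -β u`. It is alternating because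
`ε(u,u) = α u = 0` for `u + α ∈ L`.
-/

theorem existsUnique_comp_eq_of_factorsThrough {R M N P : Type*} [Semiring R] [AddCommMonoid M]
    [AddCommMonoid N] [AddCommMonoid P] [Module R M] [Module R N] [Module R P]
    {f : M →ₗ[R] N} {g : M →ₗ[R] P} (hf : Function.Surjective f)
    (hfg : Function.FactorsThrough g f) : ∃! h : N →ₗ[R] P, h ∘ₗ f = g := by
  have g_surjInv (x : M) : g (Function.surjInv hf (f x)) = g x :=
    hfg (Function.surjInv_eq hf (f x))
  let descent : N →ₗ[R] P :=
    { toFun := fun y => g (Function.surjInv hf y)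
      map_add' := hf.forall₂.2 fun x y => by simp only [← map_add, g_surjInv]
      map_smul' := fun c => hf.forall.2 fun x => by
        simp only [← map_smul, g_surjInv, RingHom.id_apply] }
  have descent_comp : descent ∘ₗ f = g := LinearMap.ext g_surjInv
  exact ⟨descent, descent_comp,
    fun h hh => (LinearMap.cancel_right hf).1 (hh.trans descent_comp.symm)⟩

section IsotropicSubmodule

variable {R M : Type*} [CommRing R] [AddCommGroup M] [Module R M]

/-- The map `u + α ↦ α|_E` from a submodule `L` of `M ⊕ M*` to the dual of its projection
`E = π(L)`. It takes values in `E*` rather than `M*` so that it can be compared with a bilinear form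
on `E`, viewed as a map `E → E*`. -/
def covectorRestrict (L : Submodule R (M × Dual R M)) :
    L →ₗ[R] Dual R (L.map (LinearMap.fst R M (Dual R M))) :=
  (L.map (LinearMap.fst R M (Dual R M))).dualRestrict ∘ₗ LinearMap.snd R M (Dual R M) ∘ₗ L.subtype

@[simp]
theorem covectorRestrict_apply (L : Submodule R (M × Dual R M)) (p : L)
    (v : L.map (LinearMap.fst R M (Dual R M))) : covectorRestrict L p v = p.1.2 v :=
  rfl

theorem snd_apply_fst_eq_neg {L : Submodule R (M × Dual R M)} (hL : ∀ p ∈ L, p.2 p.1 = 0)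
    {p q : M × Dual R M} (hp : p ∈ L) (hq : q ∈ L) : p.2 q.1 = -q.2 p.1 := by
  have polarization : (p + q).2 (p + q).1 = 0 := hL _ (L.add_mem hp hq)
  simp only [Prod.fst_add, Prod.snd_add, map_add, LinearMap.add_apply, hL p hp, hL q hq]
    at polarization
  linear_combination polarization

theorem covectorRestrict_factorsThrough {L : Submodule R (M × Dual R M)}
    (hL : ∀ p ∈ L, p.2 p.1 = 0) :
    Function.FactorsThrough (covectorRestrict L)
      ((LinearMap.fst R M (Dual R M)).submoduleMap L) := by
  intro p q hpq
  have h_fst : p.1.1 = q.1.1 := congrArg Subtype.val hpq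
  ext ⟨_, r, hr, rfl⟩
  calc p.1.2 r.1 = -r.2 p.1.1 := snd_apply_fst_eq_neg hL p.2 hr
    _ = -r.2 q.1.1 := by rw [h_fst]
    _ = q.1.2 r.1 := (snd_apply_fst_eq_neg hL q.2 hr).symm

theorem isAlt_of_comp_submoduleMap_fst_eq {L : Submodule R (M × Dual R M)}
    (hL : ∀ p ∈ L, p.2 p.1 = 0)
    {ε : LinearMap.BilinForm R (L.map (LinearMap.fst R M (Dual R M)))}
    (hε : ε ∘ₗ (LinearMap.fst R M (Dual R M)).submoduleMap L = covectorRestrict L) : ε.IsAlt := by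
  intro x
  obtain ⟨p, rfl⟩ := (LinearMap.fst R M (Dual R M)).submoduleMap_surjective L x
  calc ε ((LinearMap.fst R M (Dual R M)).submoduleMap L p) _ = covectorRestrict L p _ := by
        rw [← hε, LinearMap.comp_apply]
    _ = p.1.2 p.1.1 := by
        rw [covectorRestrict_apply, LinearMap.submoduleMap_coe_apply, LinearMap.fst_apply]
    _ = 0 := hL p.1 p.2

-- Isotropy is expressed through the quadratic form `u + α ↦ α u`: `2` need not be regular in `R`.
theorem exists_unique_alt_form_of_isotropic_general (L : Submodule R (M × Dual R M))
    (hL : ∀ p ∈ L, p.2 p.1 = 0) :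
    ∃! ε : LinearMap.BilinForm R (L.map (LinearMap.fst R M (Dual R M))),
      ε.IsAlt ∧ ε ∘ₗ (LinearMap.fst R M (Dual R M)).submoduleMap L = covectorRestrict L := by
  obtain ⟨ε, hε, hε_unique⟩ := existsUnique_comp_eq_of_factorsThrough
    ((LinearMap.fst R M (Dual R M)).submoduleMap_surjective L) (covectorRestrict_factorsThrough hL)
  exact ⟨ε, ⟨isAlt_of_comp_submoduleMap_fst_eq hL hε, hε⟩, fun ε' hε' => hε_unique ε' hε'.2⟩

end IsotropicSubmodule

theorem IsIsotropic.snd_apply_fst_self {L : Submodule ℝ (V × Dual ℝ V)} (hL : IsIsotropic L)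
    {p : V × Dual ℝ V} (hp : p ∈ L) : p.2 p.1 = 0 := by
  simpa [diracPairing] using hL p hp p hp

theorem mem_LSpace_iff {E : Submodule ℝ V} {ε : LinearMap.BilinForm ℝ E} {p : V × Dual ℝ V}
    (hp : p.1 ∈ E) : p ∈ LSpace E ε ↔ ∀ v : E, ε ⟨p.1, hp⟩ v = p.2 v := by
  refine ⟨?_, fun h => ⟨⟨p.1, hp⟩, rfl, fun v => (h v).symm⟩⟩
  rintro ⟨u, hu, h⟩ v
  obtain rfl : u = ⟨p.1, hp⟩ := Subtype.ext hu.symm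
  exact (h v).symm

theorem le_LSpace_map_fst_iff {L : Submodule ℝ (V × Dual ℝ V)}
    {ε : LinearMap.BilinForm ℝ (L.map (LinearMap.fst ℝ V (Dual ℝ V)))} :
    L ≤ LSpace (L.map (LinearMap.fst ℝ V (Dual ℝ V))) ε ↔
      ε ∘ₗ (LinearMap.fst ℝ V (Dual ℝ V)).submoduleMap L = covectorRestrict L := by
  refine ⟨fun h => LinearMap.ext₂ fun p => ?_, fun h p hp => ?_⟩
  · exact (mem_LSpace_iff (Submodule.mem_map_of_mem p.2)).1 (h p.2)
  · exact (mem_LSpace_iff (Submodule.mem_map_of_mem hp)).2 (LinearMap.congr_fun₂ h ⟨p, hp⟩)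

theorem exists_unique_alt_form_of_isotropic
    (V : Type*) [AddCommGroup V] [Module ℝ V] [FiniteDimensional ℝ V]
    (L : Submodule ℝ (V × Module.Dual ℝ V)) (hL : IsIsotropic L) :
    ∃ ε : ↥(L.map (LinearMap.fst ℝ V (Module.Dual ℝ V))) →ₗ[ℝ]
          ↥(L.map (LinearMap.fst ℝ V (Module.Dual ℝ V))) →ₗ[ℝ] ℝ,
      ((∀ x, ε x x = 0) ∧ L ≤ LSpace (L.map (LinearMap.fst ℝ V (Module.Dual ℝ V))) ε) ∧
      ∀ ε' : ↥(L.map (LinearMap.fst ℝ V (Module.Dual ℝ V))) →ₗ[ℝ]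
             ↥(L.map (LinearMap.fst ℝ V (Module.Dual ℝ V))) →ₗ[ℝ] ℝ,
        (∀ x, ε' x x = 0) → L ≤ LSpace (L.map (LinearMap.fst ℝ V (Module.Dual ℝ V))) ε' →
        ε' = ε := by
  simpa only [ExistsUnique, and_imp, LinearMap.BilinForm.IsAlt, LinearMap.IsAlt,
    le_LSpace_map_fst_iff] using
    exists_unique_alt_form_of_isotropic_general L fun _ => hL.snd_apply_fst_self
end

section
/- Let (V,g) be a finite-dimensional real inner product space, let J₊, J₋ be orthogonal complex structures on V, and set ℋ⁺ = ker(J₊ − J₋), ℋ⁻ = ker(J₊ + J₋) and 𝒱 = (ℋ⁺ ⊕ ℋ⁻)^⊥. Then ℋ⁺, ℋ⁻ and 𝒱 are each invariant under both J₊ and J₋, and both J₊ − J₋ and J₊ + J₋ restrict to linear automorphisms of 𝒱. -/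
open scoped RealInnerProductSpace

/-!
Since `J₊² = J₋²`, the kernels `ℋ⁺ = ker (J₊ - J₋)` and `ℋ⁻ = ker (J₊ + J₋)` are invariant. An
orthogonal complex structure is skew-adjoint, so the orthogonal complement `𝒱` of the invariant
subspace `ℋ⁺ ⊔ ℋ⁻` is invariant as well. Hence `J₊ - J₋` and `J₊ + J₋` map `𝒱` to itself; their
kernels are orthogonal to `𝒱`, so they are injective on this finite-dimensional space and therefore
bijective.
-/

open scoped InnerProductSpace
open Module.End

section Invariant

variable {R M : Type*} [Ring R] [AddCommGroup M] [Module R M] {A B : M →ₗ[R] M}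

theorem ker_sub_mem_invtSubmodule_left (h : A ∘ₗ A = B ∘ₗ B) :
    (A - B).ker ∈ invtSubmodule A := by
  rw [mem_invtSubmodule_iff_forall_mem_of_mem]
  intro x hx
  have hAB : A x = B x := by simpa [sub_eq_zero] using hx
  calc (A - B) (A x) = A (A x) - B (B x) := by rw [LinearMap.sub_apply, ← hAB]
    _ = 0 := sub_eq_zero.2 (LinearMap.congr_fun h x)

theorem ker_sub_mem_invtSubmodule_right (h : A ∘ₗ A = B ∘ₗ B) :
    (A - B).ker ∈ invtSubmodule B := by
  rw [← neg_sub, LinearMap.ker_neg]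
  exact ker_sub_mem_invtSubmodule_left h.symm

theorem ker_add_mem_invtSubmodule_left (h : A ∘ₗ A = B ∘ₗ B) :
    (A + B).ker ∈ invtSubmodule A := by
  rw [← sub_neg_eq_add]
  exact ker_sub_mem_invtSubmodule_left (by simpa [LinearMap.neg_comp, LinearMap.comp_neg] using h)

theorem ker_add_mem_invtSubmodule_right (h : A ∘ₗ A = B ∘ₗ B) :
    (A + B).ker ∈ invtSubmodule B := by
  rw [add_comm]
  exact ker_add_mem_invtSubmodule_left h.symm

theorem sub_mem_invtSubmodule {p : Submodule R M} (hA : p ∈ invtSubmodule A)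
    (hB : p ∈ invtSubmodule B) : p ∈ invtSubmodule (A - B) :=
  fun _ hx ↦ p.sub_mem (hA hx) (hB hx)

end Invariant

theorem map_eq_of_disjoint_ker {K M : Type*} [DivisionRing K] [AddCommGroup M] [Module K M]
    {f : M →ₗ[K] M} {p : Submodule K M} [FiniteDimensional K p] (hp : p ∈ invtSubmodule f)
    (hker : Disjoint p f.ker) : p.map f = p :=
  le_antisymm ((mem_invtSubmodule_iff_map_le f).1 hp)
    ((LinearMap.injOn_iff_surjOn hp).1 (LinearMap.disjoint_ker_iff_injOn.1 hker))

section InnerProductSpace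

variable {𝕜 V : Type*} [RCLike 𝕜] [NormedAddCommGroup V] [InnerProductSpace 𝕜 V]

theorem inner_map_left_eq_neg_of_comp_self_eq_neg_id {J : V →ₗ[𝕜] V}
    (hJ : J ∘ₗ J = -LinearMap.id) (hinner : ∀ x y, ⟪J x, J y⟫_𝕜 = ⟪x, y⟫_𝕜) (x y : V) :
    ⟪J x, y⟫_𝕜 = -⟪x, J y⟫_𝕜 := by
  have hJJ : J (J x) = -x := LinearMap.congr_fun hJ x
  rw [← hinner (J x) y, hJJ, inner_neg_left]

theorem orthogonal_mem_invtSubmodule_of_skew {A : V →ₗ[𝕜] V}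
    (hA : ∀ x y, ⟪A x, y⟫_𝕜 = -⟪x, A y⟫_𝕜) {W : Submodule 𝕜 V} (hW : W ∈ invtSubmodule A) :
    Wᗮ ∈ invtSubmodule A := by
  rw [mem_invtSubmodule_iff_forall_mem_of_mem] at hW ⊢
  intro x hx w hw
  rw [← neg_eq_zero, ← hA]
  exact hx (A w) (hW w hw)

theorem disjoint_orthogonal_ker {f : V →ₗ[𝕜] V} {W : Submodule 𝕜 V} (hker : f.ker ≤ W) :
    Disjoint Wᗮ f.ker :=
  W.orthogonal_disjoint.symm.mono_right hker

/-- The subspace `𝒱 = (ℋ⁺ ⊕ ℋ⁻)ᗮ` attached to a pair of endomorphisms, where `ℋ⁺` and `ℋ⁻` are the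
subspaces on which they agree and on which they are opposite. The sum is encoded as a supremum. -/
def verticalSubspace (A B : V →ₗ[𝕜] V) : Submodule 𝕜 V :=
  ((A - B).ker ⊔ (A + B).ker)ᗮ

theorem verticalSubspace_mem_invtSubmodule_left {A B : V →ₗ[𝕜] V}
    (hA : ∀ x y, ⟪A x, y⟫_𝕜 = -⟪x, A y⟫_𝕜) (h : A ∘ₗ A = B ∘ₗ B) :
    verticalSubspace A B ∈ invtSubmodule A :=
  orthogonal_mem_invtSubmodule_of_skew hA <| invtSubmodule.sup_mem
    (ker_sub_mem_invtSubmodule_left h) (ker_add_mem_invtSubmodule_left h)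

theorem verticalSubspace_mem_invtSubmodule_right {A B : V →ₗ[𝕜] V}
    (hB : ∀ x y, ⟪B x, y⟫_𝕜 = -⟪x, B y⟫_𝕜) (h : A ∘ₗ A = B ∘ₗ B) :
    verticalSubspace A B ∈ invtSubmodule B :=
  orthogonal_mem_invtSubmodule_of_skew hB <| invtSubmodule.sup_mem
    (ker_sub_mem_invtSubmodule_right h) (ker_add_mem_invtSubmodule_right h)

theorem invariance_and_automorphisms_general (A B : V →ₗ[𝕜] V)
    (hA : ∀ x y, ⟪A x, y⟫_𝕜 = -⟪x, A y⟫_𝕜) (hB : ∀ x y, ⟪B x, y⟫_𝕜 = -⟪x, B y⟫_𝕜)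
    (h : A ∘ₗ A = B ∘ₗ B) [FiniteDimensional 𝕜 (verticalSubspace A B)] :
    ((A - B).ker.map A ≤ (A - B).ker ∧ (A - B).ker.map B ≤ (A - B).ker) ∧
    ((A + B).ker.map A ≤ (A + B).ker ∧ (A + B).ker.map B ≤ (A + B).ker) ∧
    ((verticalSubspace A B).map A ≤ verticalSubspace A B ∧
      (verticalSubspace A B).map B ≤ verticalSubspace A B) ∧
    ((verticalSubspace A B).map (A - B) = verticalSubspace A B ∧
      ∀ x ∈ verticalSubspace A B, (A - B) x = 0 → x = 0) ∧
    ((verticalSubspace A B).map (A + B) = verticalSubspace A B ∧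
      ∀ x ∈ verticalSubspace A B, (A + B) x = 0 → x = 0) := by
  simp only [← mem_invtSubmodule_iff_map_le, ← LinearMap.disjoint_ker]
  have hVA : verticalSubspace A B ∈ invtSubmodule A := verticalSubspace_mem_invtSubmodule_left hA h
  have hVB : verticalSubspace A B ∈ invtSubmodule B := verticalSubspace_mem_invtSubmodule_right hB h
  have hsub : Disjoint (verticalSubspace A B) (A - B).ker := disjoint_orthogonal_ker le_sup_left
  have hadd : Disjoint (verticalSubspace A B) (A + B).ker := disjoint_orthogonal_ker le_sup_right
  exact ⟨⟨ker_sub_mem_invtSubmodule_left h, ker_sub_mem_invtSubmodule_right h⟩,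
    ⟨ker_add_mem_invtSubmodule_left h, ker_add_mem_invtSubmodule_right h⟩, ⟨hVA, hVB⟩,
    ⟨map_eq_of_disjoint_ker (sub_mem_invtSubmodule hVA hVB) hsub, hsub⟩,
    ⟨map_eq_of_disjoint_ker
      (invtSubmodule_inf_invtSubmodule_le_invtSubmodule_add _ _ ⟨hVA, hVB⟩) hadd, hadd⟩⟩

end InnerProductSpace

theorem invariance_and_automorphisms
    (V : Type*) [NormedAddCommGroup V] [InnerProductSpace ℝ V] [FiniteDimensional ℝ V]
    (Jp Jm : V →ₗ[ℝ] V)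
    (hp2 : Jp ∘ₗ Jp = -LinearMap.id) (hpo : ∀ X Y : V, ⟪Jp X, Jp Y⟫ = ⟪X, Y⟫)
    (hm2 : Jm ∘ₗ Jm = -LinearMap.id) (hmo : ∀ X Y : V, ⟪Jm X, Jm Y⟫ = ⟪X, Y⟫) :
    ((LinearMap.ker (Jp - Jm)).map Jp ≤ LinearMap.ker (Jp - Jm) ∧
     (LinearMap.ker (Jp - Jm)).map Jm ≤ LinearMap.ker (Jp - Jm)) ∧
    ((LinearMap.ker (Jp + Jm)).map Jp ≤ LinearMap.ker (Jp + Jm) ∧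
     (LinearMap.ker (Jp + Jm)).map Jm ≤ LinearMap.ker (Jp + Jm)) ∧
    (((LinearMap.ker (Jp - Jm) ⊔ LinearMap.ker (Jp + Jm))ᗮ).map Jp ≤
        (LinearMap.ker (Jp - Jm) ⊔ LinearMap.ker (Jp + Jm))ᗮ ∧
     ((LinearMap.ker (Jp - Jm) ⊔ LinearMap.ker (Jp + Jm))ᗮ).map Jm ≤
        (LinearMap.ker (Jp - Jm) ⊔ LinearMap.ker (Jp + Jm))ᗮ) ∧
    (((LinearMap.ker (Jp - Jm) ⊔ LinearMap.ker (Jp + Jm))ᗮ).map (Jp - Jm) =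
        (LinearMap.ker (Jp - Jm) ⊔ LinearMap.ker (Jp + Jm))ᗮ ∧
      ∀ x ∈ (LinearMap.ker (Jp - Jm) ⊔ LinearMap.ker (Jp + Jm))ᗮ,
        (Jp - Jm) x = 0 → x = 0) ∧
    (((LinearMap.ker (Jp - Jm) ⊔ LinearMap.ker (Jp + Jm))ᗮ).map (Jp + Jm) =
        (LinearMap.ker (Jp - Jm) ⊔ LinearMap.ker (Jp + Jm))ᗮ ∧
      ∀ x ∈ (LinearMap.ker (Jp - Jm) ⊔ LinearMap.ker (Jp + Jm))ᗮ,
        (Jp + Jm) x = 0 → x = 0) :=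
  invariance_and_automorphisms_general Jp Jm (inner_map_left_eq_neg_of_comp_self_eq_neg_id hp2 hpo)
    (inner_map_left_eq_neg_of_comp_self_eq_neg_id hm2 hmo) (hp2.trans hm2.symm)
end

section
/- Let V be a finite-dimensional real vector space, ε a nondegenerate alternating bilinear form on V with induced isomorphism ε̃ : V → V*, and J a complex structure on V such that ε(JX,X) > 0 for all nonzero X ∈ V; set J₊ = J and J₋ = −ε̃⁻¹ ∘ J^* ∘ ε̃, and let g be the positive definite symmetric bilinear form g(X,Y) = ½ ε((J₊+J₋)X, Y) with induced isomorphism g̃ : V → V*. Then, as linear maps from V* to V: ½ (J ∘ ε̃⁻¹ + ε̃⁻¹ ∘ J^*) = ½ (J₊ − J₋) ∘ ε̃⁻¹ = ¼ (J₊ ∘ J₋ − J₋ ∘ J₊) ∘ g̃⁻¹. -/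
open Module

/-!
The map `-J₋` is the `ε`-adjoint of `J`, so `J₋ ^ 2` is the `ε`-adjoint of `J ^ 2`; since
`J ^ 2 = -1` is self-adjoint, `J₋ ^ 2 = J ^ 2`. Hence `(J - J₋) (J + J₋)` is the commutator of `J`
and `J₋`, and the second formula is this identity composed with the inverse of
`g̃ = ½ ε̃ (J + J₋)`.
-/

theorem comp_self_eq_of_isAdjointPair {R V M : Type*} [CommSemiring R]
    [AddCommMonoid V] [Module R V] [AddCommMonoid M] [Module R M] {B : V →ₗ[R] V →ₗ[R] M}
    (hB : Function.Injective B) {f g : V →ₗ[R] V}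
    (hf : LinearMap.IsSelfAdjoint B (f ∘ₗ f)) (hgf : LinearMap.IsAdjointPair B B g f) :
    f ∘ₗ f = g ∘ₗ g := by
  have hgg : LinearMap.IsAdjointPair B B (g ∘ₗ g) (f ∘ₗ f) := hgf.comp hgf
  ext x
  exact hB (LinearMap.ext fun y ↦ (hf x y).trans (hgg x y).symm)

theorem sub_mul_add_eq_sub_of_mul_self_eq {A : Type*} [NonUnitalNonAssocRing A] {a b : A}
    (h : a * a = b * b) : (a - b) * (a + b) = a * b - b * a := by
  rw [sub_mul, mul_add, mul_add, h]
  abel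

section

variable {R V : Type*} [CommRing R] [AddCommGroup V] [Module R V]

theorem sub_comp_symm_eq_smul_commutator_comp_symm {W : Type*} [AddCommGroup W] [Module R W]
    {e G : V ≃ₗ[R] W} {A B : V →ₗ[R] V} {r : R} (hAB : A ∘ₗ A = B ∘ₗ B)
    (hG : G.toLinearMap = r • (e.toLinearMap ∘ₗ (A + B))) :
    (A - B) ∘ₗ e.symm.toLinearMap = r • ((A ∘ₗ B - B ∘ₗ A) ∘ₗ G.symm.toLinearMap) := by
  rw [← LinearMap.smul_comp, LinearEquiv.eq_comp_toLinearMap_symm]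
  calc ((A - B) ∘ₗ e.symm.toLinearMap) ∘ₗ G.toLinearMap
      = r • ((A - B) ∘ₗ (A + B)) := by
        ext x
        simp only [hG, LinearMap.comp_apply, LinearMap.smul_apply, map_smul, LinearEquiv.coe_coe,
          LinearEquiv.symm_apply_apply]
    _ = r • (A ∘ₗ B - B ∘ₗ A) :=
        congrArg (r • ·) (sub_mul_add_eq_sub_of_mul_self_eq (A := Module.End R V) hAB)

theorem associated_bivector_formulas_general
    (e : V ≃ₗ[R] Dual R V) (J : V →ₗ[R] V)
    (hJ : LinearMap.IsSelfAdjoint e.toLinearMap (J ∘ₗ J))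
    (Jm : V →ₗ[R] V)
    (hJm : Jm = -(e.symm.toLinearMap ∘ₗ J.dualMap ∘ₗ e.toLinearMap))
    (G : V ≃ₗ[R] Dual R V) (r : R)
    (hG : ∀ X Y : V, G X Y = r * e ((J + Jm) X) Y) :
    J ∘ₗ e.symm.toLinearMap + e.symm.toLinearMap ∘ₗ J.dualMap =
      (J - Jm) ∘ₗ e.symm.toLinearMap ∧
    (J - Jm) ∘ₗ e.symm.toLinearMap =
      r • ((J ∘ₗ Jm - Jm ∘ₗ J) ∘ₗ G.symm.toLinearMap) := by
  have hadj : LinearMap.IsAdjointPair e.toLinearMap e.toLinearMap ⇑(-Jm) J :=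
    fun X Y ↦ by simp [hJm]
  have hsq : J ∘ₗ J = Jm ∘ₗ Jm := by
    simpa using comp_self_eq_of_isAdjointPair e.injective hJ hadj
  have hG' : G.toLinearMap = r • (e.toLinearMap ∘ₗ (J + Jm)) := LinearMap.ext₂ hG
  constructor
  · ext f
    simp [hJm]
  · exact sub_comp_symm_eq_smul_commutator_comp_symm hsq hG'

end

theorem associated_bivector_formulas
    (V : Type*) [AddCommGroup V] [Module ℝ V] [FiniteDimensional ℝ V]
    (e : V ≃ₗ[ℝ] Module.Dual ℝ V) (halt : ∀ X : V, e X X = 0)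
    (J : V →ₗ[ℝ] V) (hJ : J ∘ₗ J = -LinearMap.id)
    (hpos : ∀ X : V, X ≠ 0 → 0 < e (J X) X)
    (Jm : V →ₗ[ℝ] V)
    (hJm : Jm = -(e.symm.toLinearMap ∘ₗ J.dualMap ∘ₗ e.toLinearMap))
    (G : V ≃ₗ[ℝ] Module.Dual ℝ V)
    (hG : ∀ X Y : V, G X Y = (1 / 2 : ℝ) * e ((J + Jm) X) Y) :
    (1 / 2 : ℝ) • (J ∘ₗ e.symm.toLinearMap + e.symm.toLinearMap ∘ₗ J.dualMap) =
      (1 / 2 : ℝ) • ((J - Jm) ∘ₗ e.symm.toLinearMap) ∧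
    (1 / 2 : ℝ) • ((J - Jm) ∘ₗ e.symm.toLinearMap) =
      (1 / 4 : ℝ) • ((J ∘ₗ Jm - Jm ∘ₗ J) ∘ₗ G.symm.toLinearMap) := by
  obtain ⟨h₁, h₂⟩ := associated_bivector_formulas_general e J (fun X Y ↦ by simp [hJ]) Jm hJm G _ hG
  exact ⟨by rw [h₁], by rw [h₂, smul_smul]; norm_num⟩
end
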